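/- Let (X, Σ, μ; φ) be a measure-preserving dynamical system with discrete spectrum. Then there exist a compact Hausdorff space K, a continuous map ψ : K → K, and a ψ-invariant regular Borel probability measure μ_K on K such that: (1) the topological dynamical system (K, ψ) has discrete spectrum; (2) there is a bijective linear isometry S : L¹(K, μ_K) → L¹(X, μ) with S1 = 1, S|f| = |Sf| for all f, and S ∘ T_ψ = T_φ ∘ S (a Markov isomorphism intertwining the Koopman operators); and (3) the projection q : K → L of (K, ψ) onto its maximal trivial factor admits a continuous section s : L → K with q ∘ s = id_L. -/

import Mathlib

universe u

/-- A measure-preserving dynamical system has discrete spectrum if the linear span of the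
eigenvectors, with unimodular eigenvalues, of its Koopman operator on `L¹` is dense
in `L¹`. -/
def L1DiscreteSpectrum {X : Type*} [MeasurableSpace X] (μ : MeasureTheory.Measure X)
    (φ : X → X) : Prop :=
  Dense (↑(Submodule.span ℂ
    {f : MeasureTheory.Lp ℂ 1 μ | f ≠ 0 ∧ ∃ lam : ℂ, ‖lam‖ = 1 ∧
      (fun x => f (φ x)) =ᵐ[μ] fun x => lam * f x}) : Set (MeasureTheory.Lp ℂ 1 μ))

/-- A topological dynamical system has discrete spectrum if the linear span of the
eigenvectors of its Koopman operator with unimodular eigenvalues is dense in `C(K)`. -/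
def DiscreteSpectrum {K : Type*} [TopologicalSpace K] (ψ : K → K) : Prop :=
  Dense (↑(Submodule.span ℂ
    {f : C(K, ℂ) | f ≠ 0 ∧ ∃ lam : ℂ, ‖lam‖ = 1 ∧ ∀ x, f (ψ x) = lam * f x}) :
      Set C(K, ℂ))

/-- A topological model, with a continuous section of the projection onto the maximal
trivial factor, of a measure-preserving dynamical system `(X, μ; φ)`:
a compact Hausdorff topological dynamical system `(K, ψ)` with discrete spectrum, equipped
with an invariant regular Borel probability measure `μK`, which is Markov-isomorphic to
`(X, μ; φ)` via a bijective linear isometry `S : L¹(K, μK) → L¹(X, μ)` satisfying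
`S 1 = 1`, `S |f| = |S f|` and `S ∘ T_ψ = T_φ ∘ S`, and whose projection `q : K → L`
onto the maximal trivial factor admits a continuous section `s`. -/
structure TopologicalModel {X : Type u} [MeasurableSpace X] (μ : MeasureTheory.Measure X)
    (φ : X → X) where
  K : Type u
  [tK : TopologicalSpace K]
  [cK : CompactSpace K]
  [t2K : T2Space K]
  [mK : MeasurableSpace K]
  [bK : BorelSpace K]
  ψ : K → K
  hψ : Continuous ψ
  μK : MeasureTheory.Measure K
  [probK : MeasureTheory.IsProbabilityMeasure μK]
  regK : μK.Regular
  invK : MeasureTheory.MeasurePreserving ψ μK μK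
  discrete : DiscreteSpectrum ψ
  S : MeasureTheory.Lp ℂ 1 μK ≃ₗᵢ[ℂ] MeasureTheory.Lp ℂ 1 μ
  S_one : ∀ g : MeasureTheory.Lp ℂ 1 μK,
    (⇑g =ᵐ[μK] fun _ => (1 : ℂ)) → ⇑(S g) =ᵐ[μ] fun _ => (1 : ℂ)
  S_abs : ∀ f g : MeasureTheory.Lp ℂ 1 μK, (⇑g =ᵐ[μK] fun x => (‖f x‖ : ℂ)) →
    ⇑(S g) =ᵐ[μ] fun x => (‖S f x‖ : ℂ)
  S_intertwine : ∀ f g : MeasureTheory.Lp ℂ 1 μK, (⇑g =ᵐ[μK] fun x => f (ψ x)) →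
    ⇑(S g) =ᵐ[μ] fun x => S f (φ x)
  L : Type u
  [tL : TopologicalSpace L]
  [cL : CompactSpace L]
  [t2L : T2Space L]
  q : K → L
  hq : Continuous q
  hqsurj : Function.Surjective q
  hmax : ∀ f : C(K, ℂ), (∀ x, f (ψ x) = f x) ↔ ∃ g : C(L, ℂ), f = g.comp ⟨q, hq⟩
  s : L → K
  hs : Continuous s
  hsec : ∀ l, q (s l) = l

set_option linter.unusedVariables false
section TMproof
open MeasureTheory Filter Topology

namespace TM

variable {X : Type u} [MeasurableSpace X] (μ : Measure X) (φ : X → X)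

/-- Index set: bounded measurable eigenfunctions together with eigenvalues. -/
def E : Type u :=
  {e : (X → ℂ) × ℂ // Measurable e.1 ∧ (∀ x, ‖e.1 x‖ ≤ 1) ∧ ‖e.2‖ = 1 ∧
    (fun x => e.1 (φ x)) =ᵐ[μ] fun x => e.2 * e.1 x}

/-- The big product of discs. -/
abbrev P : Type u := E μ φ → Metric.closedBall (0 : ℂ) 1

instance : CompactSpace (Metric.closedBall (0 : ℂ) 1) :=
  isCompact_iff_compactSpace.1 (isCompact_closedBall _ _)

noncomputable instance : MeasurableSpace (P μ φ) := borel _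
instance : BorelSpace (P μ φ) := ⟨rfl⟩

noncomputable def pr (x : X) : P μ φ := fun e => ⟨e.1.1 x, by simpa using e.2.2.1 x⟩

noncomputable def rot (p : P μ φ) : P μ φ := fun e => ⟨e.1.2 * (p e : ℂ), by
  have := (p e).2
  simp only [Metric.mem_closedBall, dist_zero_right] at this ⊢
  rw [norm_mul, e.2.2.2.1, one_mul]; exact this⟩

lemma rot_cont : Continuous (rot μ φ) := by
  unfold rot
  fun_prop

/-- coordinates -/
noncomputable def coord (e : E μ φ) : C(P μ φ, ℂ) := ⟨fun p => (p e : ℂ), by fun_prop⟩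

@[simp] lemma coord_apply (e : E μ φ) (p : P μ φ) : coord μ φ e p = (p e : ℂ) := rfl

/-- Continuous functions that behave well. -/
noncomputable def good (hφ : Measurable φ) : StarSubalgebra ℂ C(P μ φ, ℂ) where
  carrier := {g | Measurable (fun x => g (pr μ φ x)) ∧
    (fun x => g (pr μ φ (φ x))) =ᵐ[μ] fun x => g (rot μ φ (pr μ φ x))}
  mul_mem' := by
    rintro a b ⟨ha, ha'⟩ ⟨hb, hb'⟩
    refine ⟨ha.mul hb, ?_⟩
    filter_upwards [ha', hb'] with x h1 h2
    simp [h1, h2]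
  add_mem' := by
    rintro a b ⟨ha, ha'⟩ ⟨hb, hb'⟩
    refine ⟨ha.add hb, ?_⟩
    filter_upwards [ha', hb'] with x h1 h2
    simp [h1, h2]
  algebraMap_mem' := by
    intro r
    refine ⟨by simp, ?_⟩
    simp
  star_mem' := by
    rintro a ⟨ha, ha'⟩
    refine ⟨?_, ?_⟩
    · exact Complex.continuous_conj.measurable.comp ha
    filter_upwards [ha'] with x h1
    simp [h1]

lemma good_closed (hφ : Measurable φ) : IsClosed (good μ φ hφ : Set C(P μ φ, ℂ)) := by
  refine isClosed_of_closure_subset ?_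
  intro g hg
  obtain ⟨u, hu, hlim⟩ := mem_closure_iff_seq_limit.1 hg
  have hpt : ∀ p, Tendsto (fun n => u n p) atTop (𝓝 (g p)) := fun p =>
    ((continuous_eval_const p).tendsto g).comp hlim
  refine ⟨?_, ?_⟩
  · exact measurable_of_tendsto_metrizable (fun n => (hu n).1)
      (tendsto_pi_nhds.2 fun x => hpt _)
  · have : ∀ᵐ x ∂μ, ∀ n, u n (pr μ φ (φ x)) = u n (rot μ φ (pr μ φ x)) :=
      ae_all_iff.2 fun n => (hu n).2
    filter_upwards [this] with x hx
    refine tendsto_nhds_unique (hpt _) ?_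
    simp only [hx]
    exact hpt _


lemma good_top (hφ : Measurable φ) (g : C(P μ φ, ℂ)) : g ∈ good μ φ hφ := by
  have hsep : (good μ φ hφ).SeparatesPoints := by
    intro p q hpq
    obtain ⟨e, he⟩ := Function.ne_iff.1 hpq
    refine ⟨fun p => (p e : ℂ), ⟨coord μ φ e, ⟨?_, ?_⟩, rfl⟩, fun h => he (Subtype.ext h)⟩
    · exact e.2.1
    · exact e.2.2.2.2
  have h1 := ContinuousMap.starSubalgebra_topologicalClosure_eq_top_of_separatesPoints _ hsep
  have h2 : g ∈ (good μ φ hφ).topologicalClosure := by rw [h1]; trivial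
  have h3 : g ∈ closure (good μ φ hφ : Set C(P μ φ, ℂ)) := h2
  rwa [(good_closed μ φ hφ).closure_eq] at h3

lemma meas_comp (hφ : Measurable φ) (g : C(P μ φ, ℂ)) : Measurable (fun x => g (pr μ φ x)) :=
  (good_top μ φ hφ g).1

lemma comp_rot (hφ : Measurable φ) (g : C(P μ φ, ℂ)) :
    (fun x => g (pr μ φ (φ x))) =ᵐ[μ] fun x => g (rot μ φ (pr μ φ x)) :=
  (good_top μ φ hφ g).2

lemma meas_comp_real (hφ : Measurable φ) (g : C(P μ φ, ℝ)) :
    Measurable (fun x => g (pr μ φ x)) := by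
  have := Complex.measurable_re.comp
    (meas_comp μ φ hφ ((⟨Complex.ofReal, Complex.continuous_ofReal⟩ : C(ℝ, ℂ)).comp g))
  exact this

lemma comp_rot_real (hφ : Measurable φ) (g : C(P μ φ, ℝ)) :
    (fun x => g (pr μ φ (φ x))) =ᵐ[μ] fun x => g (rot μ φ (pr μ φ x)) := by
  have := (comp_rot μ φ hφ ((⟨Complex.ofReal, Complex.continuous_ofReal⟩ : C(ℝ, ℂ)).comp g))
  filter_upwards [this] with x hx
  exact Complex.ofReal_injective hx

variable [IsProbabilityMeasure μ]

lemma int_comp_real (hφ : Measurable φ) (g : C(P μ φ, ℝ)) :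
    Integrable (fun x => g (pr μ φ x)) μ :=
  Integrable.of_bound (meas_comp_real μ φ hφ g).aestronglyMeasurable ‖g‖
    (Eventually.of_forall fun x => g.norm_coe_le_norm _)

lemma memLp_comp (hφ : Measurable φ) (g : C(P μ φ, ℂ)) :
    MemLp (fun x => g (pr μ φ x)) 1 μ :=
  MemLp.of_bound (meas_comp μ φ hφ g).aestronglyMeasurable ‖g‖
    (Eventually.of_forall fun x => g.norm_coe_le_norm _)

open CompactlySupported in
noncomputable def Lam (hφ : Measurable φ) : C_c(P μ φ, ℝ) →ₚ[ℝ] ℝ where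
  toFun g := ∫ x, g (pr μ φ x) ∂μ
  map_add' g g' := integral_add (int_comp_real μ φ hφ g.toContinuousMap)
    (int_comp_real μ φ hφ g'.toContinuousMap)
  map_smul' c g := integral_smul c _
  monotone' g g' h := integral_mono (int_comp_real μ φ hφ g.toContinuousMap)
    (int_comp_real μ φ hφ g'.toContinuousMap) (fun x => h _)

noncomputable def nu (hφ : Measurable φ) : Measure (P μ φ) := RealRMK.rieszMeasure (Lam μ φ hφ)

instance (hφ : Measurable φ) : (nu μ φ hφ).Regular := by unfold nu; infer_instance
instance (hφ : Measurable φ) : IsFiniteMeasure (nu μ φ hφ) := by unfold nu; infer_instance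

lemma integral_nu (hφ : Measurable φ) (g : C(P μ φ, ℝ)) :
    ∫ p, g p ∂(nu μ φ hφ) = ∫ x, g (pr μ φ x) ∂μ :=
  RealRMK.integral_rieszMeasure (Lam μ φ hφ) (CompactlySupportedContinuousMap.continuousMapEquiv g)

instance (hφ : Measurable φ) : IsProbabilityMeasure (nu μ φ hφ) := by
  have := integral_nu μ φ hφ 1
  simp at this
  exact ⟨by simpa [measureReal_def, ENNReal.toReal_eq_one_iff] using this⟩

lemma rot_mp (hφ : MeasurePreserving φ μ μ) :
    MeasurePreserving (rot μ φ) (nu μ φ hφ.measurable) (nu μ φ hφ.measurable) := by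
  have hm := (rot_cont μ φ).measurable
  refine ⟨hm, ?_⟩
  have : (Measure.map (rot μ φ) (nu μ φ hφ.measurable)).InnerRegularCompactLTTop :=
    Measure.InnerRegularCompactLTTop.map_of_continuous (rot_cont μ φ)
  have : IsFiniteMeasure (Measure.map (rot μ φ) (nu μ φ hφ.measurable)) :=
    Measure.isFiniteMeasure_map _ _
  have : (Measure.map (rot μ φ) (nu μ φ hφ.measurable)).Regular := inferInstance
  refine Measure.ext_of_integral_eq_on_compactlySupported fun f => ?_
  rw [integral_map hm.aemeasurable (f := f) f.toContinuousMap.continuous.aestronglyMeasurable]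
  have h1 := integral_nu μ φ hφ.measurable f.toContinuousMap
  have h2 := integral_nu μ φ hφ.measurable (f.toContinuousMap.comp ⟨_, rot_cont μ φ⟩)
  have h3 : ∫ x, f (rot μ φ (pr μ φ x)) ∂μ = ∫ x, f (pr μ φ x) ∂μ := by
    refine (integral_congr_ae (comp_rot_real μ φ hφ.measurable f.toContinuousMap)).symm.trans ?_
    have h4 := (meas_comp_real μ φ hφ.measurable f.toContinuousMap)
    have := integral_map (μ := μ) hφ.measurable.aemeasurable (f := fun x => f (pr μ φ x))
      h4.aestronglyMeasurable
    rw [hφ.map_eq] at this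
    exact this.symm
  exact (h2.trans h3).trans h1.symm

section K
variable (hφ : MeasurePreserving φ μ μ)

abbrev K : Type u := (nu μ φ hφ.measurable).support

instance : CompactSpace (K μ φ hφ) :=
  isCompact_iff_compactSpace.1 Measure.isClosed_support.isCompact

noncomputable def muK : Measure (K μ φ hφ) := (nu μ φ hφ.measurable).comap Subtype.val

lemma val_mp : MeasurePreserving (Subtype.val : K μ φ hφ → P μ φ) (muK μ φ hφ)
    (nu μ φ hφ.measurable) := by
  refine ⟨measurable_subtype_coe, ?_⟩
  have hm : MeasurableSet (nu μ φ hφ.measurable).support := Measure.isClosed_support.measurableSet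
  rw [muK, (MeasurableEmbedding.subtype_coe hm).map_comap, Subtype.range_coe]
  exact Measure.restrict_eq_self_of_ae_mem Measure.support_mem_ae_of_regular

instance : IsProbabilityMeasure (muK μ φ hφ) := by
  have := (val_mp μ φ hφ).measure_preimage (s := Set.univ) MeasurableSet.univ.nullMeasurableSet
  exact ⟨by simpa using this⟩

instance : (muK μ φ hφ).Regular := by
  have hm : MeasurableSet (nu μ φ hφ.measurable).support := Measure.isClosed_support.measurableSet
  have : (muK μ φ hφ).InnerRegularCompactLTTop := by
    refine ⟨?_⟩
    rintro s ⟨hs, -⟩ r hr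
    have hs' := (MeasurableEmbedding.subtype_coe hm).measurableSet_image.2 hs
    rw [muK, (MeasurableEmbedding.subtype_coe hm).comap_apply] at hr
    obtain ⟨C, hCs, hC, hrC⟩ := hs'.exists_lt_isCompact_of_ne_top (measure_ne_top _ _) hr
    refine ⟨Subtype.val ⁻¹' C, ?_, ?_, ?_⟩
    · intro x hx
      obtain ⟨y, hy, hxy⟩ := hCs hx
      rwa [← Subtype.ext hxy]
    · have : CompactSpace (K μ φ hφ) := inferInstance
      exact @IsClosed.isCompact (K μ φ hφ) _ _ this (hC.isClosed.preimage continuous_subtype_val)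
    · rwa [(val_mp μ φ hφ).measure_preimage hC.measurableSet.nullMeasurableSet]
  infer_instance

lemma open_pos (U : Set (K μ φ hφ)) (hU : IsOpen U) (h0 : muK μ φ hφ U = 0) : U = ∅ := by
  obtain ⟨V, hV, rfl⟩ := isOpen_induced_iff.1 hU
  rw [(val_mp μ φ hφ).measure_preimage hV.measurableSet.nullMeasurableSet] at h0
  have := Measure.subset_compl_support_of_isOpen hV h0
  ext x
  simp only [Set.mem_preimage, Set.mem_empty_iff_false, iff_false]
  exact fun hx => this hx x.2

lemma rot_mem (p : P μ φ) (hp : p ∈ (nu μ φ hφ.measurable).support) :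
    rot μ φ p ∈ (nu μ φ hφ.measurable).support := by
  rw [Measure.support_eq_forall_isOpen] at hp ⊢
  intro U hU hUo
  have := hp (rot μ φ ⁻¹' U) hU (hUo.preimage (rot_cont μ φ))
  rwa [(rot_mp μ φ hφ).measure_preimage hUo.measurableSet.nullMeasurableSet] at this

noncomputable def psi (k : K μ φ hφ) : K μ φ hφ := ⟨rot μ φ k.1, rot_mem μ φ hφ _ k.2⟩

lemma psi_cont : Continuous (psi μ φ hφ) :=
  ((rot_cont μ φ).comp continuous_subtype_val).subtype_mk _

lemma psi_mp : MeasurePreserving (psi μ φ hφ) (muK μ φ hφ) (muK μ φ hφ) := by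
  refine ⟨(psi_cont μ φ hφ).measurable, ?_⟩
  ext s hs
  rw [Measure.map_apply (psi_cont μ φ hφ).measurable hs]
  obtain ⟨t, ht, rfl⟩ := hs
  rw [(val_mp μ φ hφ).measure_preimage ht.nullMeasurableSet,
    ← (rot_mp μ φ hφ).measure_preimage ht.nullMeasurableSet,
    ← (val_mp μ φ hφ).measure_preimage ((rot_cont μ φ).measurable ht).nullMeasurableSet]
  rfl

/-- Restricted coordinate. -/
noncomputable def coordK (e : E μ φ) : C(K μ φ hφ, ℂ) := (coord μ φ e).comp ⟨Subtype.val, continuous_subtype_val⟩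

/-- The monoid of eigenfunctions (and zero). -/
def eigM : Submonoid C(K μ φ hφ, ℂ) where
  carrier := {f | ∃ lam : ℂ, ‖lam‖ = 1 ∧ ∀ x, f (psi μ φ hφ x) = lam * f x}
  one_mem' := ⟨1, by simp, by simp⟩
  mul_mem' := by
    rintro a b ⟨l, hl, ha⟩ ⟨m, hm, hb⟩
    refine ⟨l * m, by simp [hl, hm], fun x => ?_⟩
    simp only [ContinuousMap.mul_apply, ha, hb]; ring

lemma psi_discrete : Dense (↑(Submodule.span ℂ
    {f : C(K μ φ hφ, ℂ) | f ≠ 0 ∧ ∃ lam : ℂ, ‖lam‖ = 1 ∧ ∀ x, f (psi μ φ hφ x) = lam * f x}) :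
      Set C(K μ φ hφ, ℂ)) := by
  have hstar : ∀ f ∈ eigM μ φ hφ, star f ∈ eigM μ φ hφ := by
    rintro f ⟨l, hl, hf⟩
    refine ⟨star l, by simpa using hl, fun x => ?_⟩
    simp [hf]
  have hadj : Subalgebra.toSubmodule (Algebra.adjoin ℂ (eigM μ φ hφ : Set C(K μ φ hφ, ℂ))) =
      Submodule.span ℂ (eigM μ φ hφ : Set C(K μ φ hφ, ℂ)) := by
    rw [Algebra.adjoin_eq_span, Submonoid.closure_eq]
  have hmem : ∀ f, f ∈ Algebra.adjoin ℂ (eigM μ φ hφ : Set C(K μ φ hφ, ℂ)) ↔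
      f ∈ Submodule.span ℂ (eigM μ φ hφ : Set C(K μ φ hφ, ℂ)) := fun f => by
    rw [← hadj]; rfl
  let A : StarSubalgebra ℂ C(K μ φ hφ, ℂ) :=
    { Algebra.adjoin ℂ (eigM μ φ hφ : Set C(K μ φ hφ, ℂ)) with
      star_mem' := by
        intro a ha
        change a ∈ Algebra.adjoin ℂ (eigM μ φ hφ : Set C(K μ φ hφ, ℂ)) at ha
        change star a ∈ Algebra.adjoin ℂ (eigM μ φ hφ : Set C(K μ φ hφ, ℂ))
        rw [hmem] at ha ⊢
        induction ha using Submodule.span_induction with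
        | mem x h => exact Submodule.subset_span (hstar x h)
        | zero => simp
        | add x y _ _ hx hy => rw [star_add]; exact add_mem hx hy
        | smul c x _ hx => rw [star_smul]; exact Submodule.smul_mem _ _ hx }
  have hsep : A.SeparatesPoints := by
    intro p q hpq
    obtain ⟨e, he⟩ := Function.ne_iff.1 (fun h => hpq (Subtype.ext h) : p.1 ≠ q.1)
    refine ⟨_, ⟨coordK μ φ hφ e, Algebra.subset_adjoin ⟨e.1.2, e.2.2.2.1, fun x => rfl⟩, rfl⟩,
      fun h => he (Subtype.ext h)⟩
  have h1 := ContinuousMap.starSubalgebra_topologicalClosure_eq_top_of_separatesPoints _ hsep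
  intro g
  have h2 : g ∈ A.topologicalClosure := by rw [h1]; trivial
  have h3 : g ∈ closure (A : Set C(K μ φ hφ, ℂ)) := h2
  refine closure_mono ?_ h3
  intro f hf
  have hf' := (hmem f).1 hf
  refine (Submodule.span_le.2 ?_) hf'
  rintro h hh
  by_cases h0 : h = 0
  · rw [h0]; exact Submodule.zero_mem _
  · exact Submodule.subset_span ⟨h0, hh⟩

end K

section S
variable (hφ : MeasurePreserving φ μ μ)

noncomputable def resK (g : C(P μ φ, ℂ)) : C(K μ φ hφ, ℂ) :=
  g.comp ⟨Subtype.val, continuous_subtype_val⟩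

noncomputable def aMap : C(P μ φ, ℂ) →ₗ[ℂ] Lp ℂ 1 (muK μ φ hφ) where
  toFun g := ContinuousMap.toLp 1 (muK μ φ hφ) ℂ (resK μ φ hφ g)
  map_add' f g := by rw [← map_add]; rfl
  map_smul' c g := by rw [RingHom.id_apply, ← map_smul]; rfl

noncomputable def bMap : C(P μ φ, ℂ) →ₗ[ℂ] Lp ℂ 1 μ where
  toFun g := (memLp_comp μ φ hφ.measurable g).toLp _
  map_add' f g := rfl
  map_smul' c g := rfl

lemma aMap_coe (g : C(P μ φ, ℂ)) : aMap μ φ hφ g =ᵐ[muK μ φ hφ] fun k => g k.1 :=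
  ContinuousMap.coeFn_toLp _ _

lemma bMap_coe (g : C(P μ φ, ℂ)) : bMap μ φ hφ g =ᵐ[μ] fun x => g (pr μ φ x) :=
  MemLp.coeFn_toLp (memLp_comp μ φ hφ.measurable g)

lemma ab_norm (g : C(P μ φ, ℂ)) : ‖bMap μ φ hφ g‖ = ‖aMap μ φ hφ g‖ := by
  rw [L1.norm_eq_integral_norm, L1.norm_eq_integral_norm]
  have h1 : ∫ x, ‖bMap μ φ hφ g x‖ ∂μ = ∫ x, ‖g (pr μ φ x)‖ ∂μ :=
    integral_congr_ae ((bMap_coe μ φ hφ g).fun_comp norm)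
  have h2 : ∫ x, ‖aMap μ φ hφ g x‖ ∂(muK μ φ hφ) = ∫ x, ‖g x.1‖ ∂(muK μ φ hφ) :=
    integral_congr_ae ((aMap_coe μ φ hφ g).fun_comp norm)
  rw [h1, h2]
  have h3 := integral_nu μ φ hφ.measurable ⟨fun p => ‖g p‖, by fun_prop⟩
  simp only [ContinuousMap.coe_mk] at h3
  have h4 := integral_map (μ := muK μ φ hφ) (φ := (Subtype.val : K μ φ hφ → P μ φ))
    measurable_subtype_coe.aemeasurable (f := fun p => ‖g p‖)
    g.continuous.norm.aestronglyMeasurable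
  rw [(val_mp μ φ hφ).map_eq] at h4
  exact h3.symm.trans h4

lemma a_dense : DenseRange (aMap μ φ hφ) := by
  have h1 : DenseRange (ContinuousMap.toLp 1 (muK μ φ hφ) ℂ : C(K μ φ hφ, ℂ) →L[ℂ] _) :=
    ContinuousMap.toLp_denseRange ℂ (muK μ φ hφ) ℂ ENNReal.one_ne_top
  refine h1.mono ?_
  rintro _ ⟨f, rfl⟩
  obtain ⟨g, hg⟩ := ContinuousMap.exists_restrict_eq
    (Measure.isClosed_support (μ := nu μ φ hφ.measurable)) f
  exact ⟨g, by rw [← hg]; rfl⟩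

lemma b_coord (e : E μ φ) (f : Lp ℂ 1 μ) (c : ℂ) (h : f =ᵐ[μ] fun x => c * e.1.1 x) :
    bMap μ φ hφ (c • coord μ φ e) = f := by
  apply Lp.ext
  filter_upwards [bMap_coe μ φ hφ (c • coord μ φ e), h] with x h1 h2
  rw [h1, h2]; rfl

/-- bounded eigenfunctions are in the range -/
lemma b_bdd (f : X → ℂ) (hf : Measurable f) (C : ℝ) (hC : ∀ x, ‖f x‖ ≤ C) (l : ℂ) (hl : ‖l‖ = 1)
    (h : (fun x => f (φ x)) =ᵐ[μ] fun x => l * f x) : ∃ e : E μ φ, e.1.2 = l ∧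
      ∃ c : ℂ, ∀ x, f x = c * e.1.1 x := by
  have hD : (0:ℝ) < |C| + 1 := by positivity
  have hD0 : ((|C| + 1 : ℝ) : ℂ) ≠ 0 := by exact_mod_cast hD.ne'
  refine ⟨⟨(fun x => ((|C| + 1 : ℝ) : ℂ)⁻¹ * f x, l), hf.const_mul _, ?_, hl, ?_⟩, rfl,
    ((|C| + 1 : ℝ) : ℂ), fun x => ?_⟩
  · intro x
    simp only [norm_mul, norm_inv, Complex.norm_real, Real.norm_eq_abs, abs_of_pos hD]
    rw [inv_mul_le_one₀ hD]
    linarith [hC x, le_abs_self C]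
  · filter_upwards [h] with x hx
    simp only [hx]; ring
  · simp only []
    rw [mul_inv_cancel_left₀ hD0]

lemma b_dense (hds : Dense (↑(Submodule.span ℂ
    {f : Lp ℂ 1 μ | f ≠ 0 ∧ ∃ lam : ℂ, ‖lam‖ = 1 ∧
      (fun x => f (φ x)) =ᵐ[μ] fun x => lam * f x}) : Set (Lp ℂ 1 μ))) :
    DenseRange (bMap μ φ hφ) := by
  have key : Submodule.span ℂ
    {f : Lp ℂ 1 μ | f ≠ 0 ∧ ∃ lam : ℂ, ‖lam‖ = 1 ∧
      (fun x => f (φ x)) =ᵐ[μ] fun x => lam * f x} ≤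
      (LinearMap.range (bMap μ φ hφ)).topologicalClosure := by
    rw [Submodule.span_le]
    rintro f ⟨-, l, hl, hf⟩
    have hfm : Measurable f := (Lp.stronglyMeasurable f).measurable
    let F : ℕ → X → ℂ := fun n => {x | ‖f x‖ ≤ n}.indicator f
    have hFm : ∀ n, Measurable (F n) := fun n =>
      hfm.indicator (measurableSet_le hfm.norm measurable_const)
    have hFle : ∀ n x, ‖F n x‖ ≤ ‖f x‖ := fun n x => norm_indicator_le_norm_self _ _
    have hFn : ∀ n x, ‖F n x‖ ≤ n := by
      intro n x
      by_cases h : ‖f x‖ ≤ n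
      · simp [F, h]
      · simp [F, h]
    have hFe : ∀ n, (fun x => F n (φ x)) =ᵐ[μ] fun x => l * F n x := by
      intro n
      filter_upwards [hf] with x hx
      by_cases h : ‖f x‖ ≤ n
      · simp [F, hx, hl, h]
      · simp [F, hx, hl, h]
    choose e he c hc using fun n => b_bdd μ φ (F n) (hFm n) n (hFn n) l hl (hFe n)
    refine mem_closure_of_tendsto (f := fun n => bMap μ φ hφ (c n • coord μ φ (e n)))
      (b := atTop) ?_ (Eventually.of_forall fun n => ⟨_, rfl⟩)
    rw [Lp.tendsto_Lp_iff_tendsto_eLpNorm']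
    have hdom := tendsto_lintegral_norm_of_dominated_convergence (μ := μ) (F := F) (f := f)
      (bound := fun x => ‖f x‖) (fun n => (hFm n).aestronglyMeasurable)
      (L1.integrable_coeFn f).norm.2 (fun n => Eventually.of_forall (hFle n))
      (Eventually.of_forall fun x => by
        refine tendsto_const_nhds.congr' ?_
        obtain ⟨N, hN⟩ := exists_nat_ge ‖f x‖
        filter_upwards [eventually_ge_atTop N] with n hn
        have : ‖f x‖ ≤ n := hN.trans (by exact_mod_cast hn)
        simp [F, this])
    refine hdom.congr fun n => ?_
    rw [eLpNorm_one_eq_lintegral_enorm]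
    refine lintegral_congr_ae ?_
    filter_upwards [bMap_coe μ φ hφ (c n • coord μ φ (e n))] with x hx
    rw [Pi.sub_apply, hx, ofReal_norm]
    congr 2
    exact hc n x
  intro f
  have h1 := closure_mono (SetLike.coe_subset_coe.2 key) (hds f)
  rw [IsClosed.closure_eq (Submodule.isClosed_topologicalClosure _)] at h1
  exact h1

variable (hds : Dense (↑(Submodule.span ℂ
    {f : Lp ℂ 1 μ | f ≠ 0 ∧ ∃ lam : ℂ, ‖lam‖ = 1 ∧
      (fun x => f (φ x)) =ᵐ[μ] fun x => lam * f x}) : Set (Lp ℂ 1 μ)))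

noncomputable def SS : Lp ℂ 1 (muK μ φ hφ) ≃ₗᵢ[ℂ] Lp ℂ 1 μ :=
  (LinearEquiv.refl ℂ C(P μ φ, ℂ)).extendOfIsometry (aMap μ φ hφ) (bMap μ φ hφ)
    (a_dense μ φ hφ) (b_dense μ φ hφ hds) (ab_norm μ φ hφ)

lemma SS_a (g : C(P μ φ, ℂ)) : SS μ φ hφ hds (aMap μ φ hφ g) = bMap μ φ hφ g :=
  LinearEquiv.extendOfIsometry_eq _ _ _ _ _ _ g

lemma SS_one (g : Lp ℂ 1 (muK μ φ hφ)) (hg : ⇑g =ᵐ[muK μ φ hφ] fun _ => (1 : ℂ)) :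
    ⇑(SS μ φ hφ hds g) =ᵐ[μ] fun _ => (1 : ℂ) := by
  have : g = aMap μ φ hφ 1 := by
    apply Lp.ext
    filter_upwards [hg, aMap_coe μ φ hφ 1] with x h1 h2
    rw [h1, h2]; rfl
  rw [this, SS_a]
  exact bMap_coe μ φ hφ 1

lemma lipn : LipschitzWith 1 (fun z : ℂ => ((‖z‖ : ℝ) : ℂ)) :=
  LipschitzWith.of_dist_le_mul fun x y => by
    simp only [dist_eq_norm, ← Complex.ofReal_sub, Complex.norm_real, NNReal.coe_one, one_mul]
    exact abs_norm_sub_norm_le x y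

lemma SS_abs (f g : Lp ℂ 1 (muK μ φ hφ)) (hg : ⇑g =ᵐ[muK μ φ hφ] fun x => (‖f x‖ : ℂ)) :
    ⇑(SS μ φ hφ hds g) =ᵐ[μ] fun x => (‖SS μ φ hφ hds f x‖ : ℂ) := by
  have key : ∀ f, SS μ φ hφ hds (lipn.compLp (by simp) f) =
      lipn.compLp (by simp) (SS μ φ hφ hds f) := by
    refine (a_dense μ φ hφ).induction ?_ (isClosed_eq ?_ ?_)
    · rintro _ ⟨v, rfl⟩
      let w : C(P μ φ, ℂ) := ⟨fun p => ((‖v p‖ : ℝ) : ℂ), by fun_prop⟩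
      have h1 : lipn.compLp (by simp) (aMap μ φ hφ v) = aMap μ φ hφ w := by
        apply Lp.ext
        filter_upwards [lipn.coeFn_compLp (by simp) (aMap μ φ hφ v), aMap_coe μ φ hφ v,
          aMap_coe μ φ hφ w] with x h1 h2 h3
        rw [h1, h3, Function.comp_apply, h2]; rfl
      rw [h1, SS_a, SS_a]
      apply Lp.ext
      filter_upwards [lipn.coeFn_compLp (by simp) (bMap μ φ hφ v), bMap_coe μ φ hφ v,
          bMap_coe μ φ hφ w] with x h1 h2 h3
      rw [h1, h3, Function.comp_apply, h2]; rfl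
    · exact (SS μ φ hφ hds).continuous.comp (lipn.continuous_compLp _)
    · exact (lipn.continuous_compLp _).comp (SS μ φ hφ hds).continuous
  have : g = lipn.compLp (by simp) f := by
    apply Lp.ext
    filter_upwards [hg, lipn.coeFn_compLp (by simp) f] with x h1 h2
    rw [h1, h2]; rfl
  rw [this, key]
  exact lipn.coeFn_compLp _ _

lemma SS_int (f g : Lp ℂ 1 (muK μ φ hφ)) (hg : ⇑g =ᵐ[muK μ φ hφ] fun x => f (psi μ φ hφ x)) :
    ⇑(SS μ φ hφ hds g) =ᵐ[μ] fun x => SS μ φ hφ hds f (φ x) := by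
  have key : ∀ f, SS μ φ hφ hds (Lp.compMeasurePreserving _ (psi_mp μ φ hφ) f) =
      Lp.compMeasurePreserving _ hφ (SS μ φ hφ hds f) := by
    refine (a_dense μ φ hφ).induction ?_ (isClosed_eq ?_ ?_)
    · rintro _ ⟨v, rfl⟩
      let w : C(P μ φ, ℂ) := v.comp ⟨_, rot_cont μ φ⟩
      have h1 : Lp.compMeasurePreserving _ (psi_mp μ φ hφ) (aMap μ φ hφ v) = aMap μ φ hφ w := by
        apply Lp.ext
        filter_upwards [Lp.coeFn_compMeasurePreserving (aMap μ φ hφ v) (psi_mp μ φ hφ),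
          (psi_mp μ φ hφ).quasiMeasurePreserving.ae (aMap_coe μ φ hφ v),
          aMap_coe μ φ hφ w] with x h1 h2 h3
        rw [h1, h3, Function.comp_apply, h2]; rfl
      rw [h1, SS_a, SS_a]
      apply Lp.ext
      filter_upwards [Lp.coeFn_compMeasurePreserving (bMap μ φ hφ v) hφ,
          hφ.quasiMeasurePreserving.ae (bMap_coe μ φ hφ v),
          bMap_coe μ φ hφ w, comp_rot μ φ hφ.measurable v] with x h1 h2 h3 h4
      rw [h1, h3, Function.comp_apply, h2, h4]; rfl
    · exact (SS μ φ hφ hds).continuous.comp (Lp.isometry_compMeasurePreserving _).continuous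
    · exact (Lp.isometry_compMeasurePreserving _).continuous.comp (SS μ φ hφ hds).continuous
  have : g = Lp.compMeasurePreserving _ (psi_mp μ φ hφ) f := by
    apply Lp.ext
    filter_upwards [hg, Lp.coeFn_compMeasurePreserving f (psi_mp μ φ hφ)] with x h1 h2
    rw [h1, h2]; rfl
  rw [this, key]
  exact Lp.coeFn_compMeasurePreserving _ _
end S

section L
variable (hφ : MeasurePreserving φ μ μ)

/-- Points not separated by invariant functions. -/
def rel : Setoid (K μ φ hφ) where
  r x y := ∀ f : C(K μ φ hφ, ℂ), (∀ z, f (psi μ φ hφ z) = f z) → f x = f y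
  iseqv := ⟨fun _ _ _ => rfl, fun h f hf => (h f hf).symm,
    fun h h' f hf => (h f hf).trans (h' f hf)⟩

abbrev LL : Type u := Quotient (rel μ φ hφ)

def qq : K μ φ hφ → LL μ φ hφ := Quotient.mk _

lemma qq_cont : Continuous (qq μ φ hφ) := continuous_quotient_mk'
lemma qq_surj : Function.Surjective (qq μ φ hφ) := Quotient.mk_surjective

lemma qq_max (f : C(K μ φ hφ, ℂ)) : (∀ x, f (psi μ φ hφ x) = f x) ↔
    ∃ g : C(LL μ φ hφ, ℂ), f = g.comp ⟨qq μ φ hφ, qq_cont μ φ hφ⟩ := by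
  constructor
  · intro hf
    refine ⟨⟨Quotient.lift f (fun a b h => h f hf), f.continuous.quotient_lift _⟩, ?_⟩
    ext x; rfl
  · rintro ⟨g, rfl⟩ x
    have : qq μ φ hφ (psi μ φ hφ x) = qq μ φ hφ x := Quotient.sound fun f hf => hf x
    simp [this]

instance : T2Space (LL μ φ hφ) := by
  refine T2Space.of_injective_continuous (Y := C(LL μ φ hφ, ℂ) → ℂ) (f := fun l g => g l) ?_ ?_
  · intro a b hab
    obtain ⟨x, rfl⟩ := qq_surj μ φ hφ a
    obtain ⟨y, rfl⟩ := qq_surj μ φ hφ b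
    refine Quotient.sound fun f hf => ?_
    obtain ⟨g, rfl⟩ := (qq_max μ φ hφ f).1 hf
    exact congrFun hab g
  · fun_prop


/-- The indicator of an invariant open set agrees a.e. with an invariant continuous function. -/
lemma exists_cont (hds : L1DiscreteSpectrum μ φ) (V : Set (K μ φ hφ)) (hV : IsOpen V) (hinv : psi μ φ hφ ⁻¹' V = V) :
    ∃ g : C(K μ φ hφ, ℂ), (∀ x, g (psi μ φ hφ x) = g x) ∧
      g =ᵐ[muK μ φ hφ] V.indicator 1 := by
  have hm1 : MemLp (V.indicator (1 : K μ φ hφ → ℂ)) 1 (muK μ φ hφ) :=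
    (memLp_const (1 : ℂ)).indicator hV.measurableSet
  have hm2 : MemLp (Vᶜ.indicator (1 : K μ φ hφ → ℂ)) 1 (muK μ φ hφ) :=
    (memLp_const (1 : ℂ)).indicator hV.measurableSet.compl
  set f1 := hm1.toLp _ with hf1
  set f2 := hm2.toLp _ with hf2
  have c1 := hm1.coeFn_toLp
  have c2 := hm2.coeFn_toLp
  have a1 := SS_abs μ φ hφ hds f1 f1 (by
    filter_upwards [c1] with x hx
    rw [hx]; by_cases h : x ∈ V <;> simp [h])
  have a2 := SS_abs μ φ hφ hds f2 f2 (by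
    filter_upwards [c2] with x hx
    rw [hx]; by_cases h : x ∈ V <;> simp [h])
  have a3 := SS_one μ φ hφ hds (f1 + f2) (by
    filter_upwards [c1, c2, Lp.coeFn_add f1 f2] with x h1 h2 h3
    rw [h3, Pi.add_apply, h1, h2]; by_cases h : x ∈ V <;> simp [h])
  have a4 := SS_int μ φ hφ hds f1 f1 (by
    filter_upwards [c1, (psi_mp μ φ hφ).quasiMeasurePreserving.ae c1] with x h1 h2
    rw [h1, h2]
    have : psi μ φ hφ x ∈ V ↔ x ∈ V := by rw [← Set.mem_preimage, hinv]
    by_cases h : x ∈ V <;> simp [h, this])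
  rw [map_add] at a3
  have hb : ∀ᵐ x ∂μ, ‖SS μ φ hφ hds f1 x‖ ≤ 1 := by
    filter_upwards [a1, a2, a3, Lp.coeFn_add (SS μ φ hφ hds f1) (SS μ φ hφ hds f2)]
      with x h1 h2 h3 h4
    rw [h4, Pi.add_apply, h1, h2] at h3
    have h5 : ‖SS μ φ hφ hds f1 x‖ + ‖SS μ φ hφ hds f2 x‖ = 1 := by exact_mod_cast h3
    linarith [norm_nonneg (SS μ φ hφ hds f2 x)]
  have hmeas : Measurable (SS μ φ hφ hds f1) := (Lp.stronglyMeasurable _).measurable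
  let F : X → ℂ := {x | ‖SS μ φ hφ hds f1 x‖ ≤ 1}.indicator (SS μ φ hφ hds f1)
  have hFeq : F =ᵐ[μ] SS μ φ hφ hds f1 := by
    filter_upwards [hb] with x hx
    simp [F, hx]
  obtain ⟨e, he, c, hc⟩ := b_bdd μ φ F
    (hmeas.indicator (measurableSet_le hmeas.norm measurable_const)) 1 (by
      intro x
      by_cases h : ‖SS μ φ hφ hds f1 x‖ ≤ 1
      · simp [F, h]
      · simp [F, h]) 1 (by simp) (by
      filter_upwards [hFeq, hφ.quasiMeasurePreserving.ae hFeq, a4] with x h1 h2 h3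
      rw [h2, h1, ← h3, one_mul])
  have hS : bMap μ φ hφ (c • coord μ φ e) = SS μ φ hφ hds f1 :=
    b_coord μ φ hφ e _ c (by
      filter_upwards [hFeq] with x h1
      rw [← h1, hc])
  rw [← SS_a μ φ hφ hds] at hS
  have hS' := (SS μ φ hφ hds).injective hS
  refine ⟨c • coordK μ φ hφ e, fun x => ?_, ?_⟩
  · have : coordK μ φ hφ e (psi μ φ hφ x) = e.1.2 * coordK μ φ hφ e x := rfl
    simp [this, he]
  · have h1 := aMap_coe μ φ hφ (c • coord μ φ e)
    rw [hS'] at h1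
    filter_upwards [h1, c1] with x h1 h2
    rw [← h2, h1]; rfl

lemma eq_on_open (W : Set (K μ φ hφ)) (hW : IsOpen W) (g : C(K μ φ hφ, ℂ)) (c : ℂ)
    (h : ∀ᵐ x ∂(muK μ φ hφ), x ∈ W → g x = c) : ∀ x ∈ W, g x = c := by
  have ho : IsOpen (W ∩ g ⁻¹' {c}ᶜ) := hW.inter (isOpen_compl_singleton.preimage g.continuous)
  have h0 : muK μ φ hφ (W ∩ g ⁻¹' {c}ᶜ) = 0 := by
    rw [ae_iff] at h
    convert h using 2
    ext x; simp
  have := open_pos μ φ hφ _ ho h0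
  intro x hx
  by_contra hne
  have : x ∈ W ∩ g ⁻¹' {c}ᶜ := ⟨hx, hne⟩
  simp_all

lemma LL_ed (hds : L1DiscreteSpectrum μ φ) : ExtremallyDisconnected (LL μ φ hφ) := by
  refine ⟨fun U hU => ?_⟩
  have hqpsi : ∀ x, qq μ φ hφ (psi μ φ hφ x) = qq μ φ hφ x :=
    fun x => Quotient.sound fun f hf => hf x
  have hVo := hU.preimage (qq_cont μ φ hφ)
  obtain ⟨g, hg, hgV⟩ := exists_cont μ φ hφ hds (qq μ φ hφ ⁻¹' U) hVo (by
    ext x; simp [hqpsi])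
  obtain ⟨g', rfl⟩ := (qq_max μ φ hφ g).1 hg
  have h1 := eq_on_open μ φ hφ _ hVo _ 1 (by
    filter_upwards [hgV] with x hx hxV
    rw [hx, Set.indicator_of_mem hxV]; rfl)
  have h0 := eq_on_open μ φ hφ (qq μ φ hφ ⁻¹' (closure U)ᶜ)
    (isClosed_closure.isOpen_compl.preimage (qq_cont μ φ hφ)) _ 0 (by
    filter_upwards [hgV] with x hx hxV
    rw [hx, Set.indicator_of_notMem]
    exact fun h => hxV (subset_closure h))
  have hU1 : ∀ l ∈ closure U, g' l = 1 := by
    have : closure U ⊆ g' ⁻¹' {1} := by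
      refine closure_minimal ?_ (isClosed_singleton.preimage g'.continuous)
      intro l hl
      obtain ⟨x, rfl⟩ := qq_surj μ φ hφ l
      exact h1 x hl
    exact this
  have : closure U = g' ⁻¹' {0}ᶜ := by
    ext l
    constructor
    · intro hl
      simp [hU1 l hl]
    · intro hl
      by_contra hn
      obtain ⟨x, rfl⟩ := qq_surj μ φ hφ l
      exact hl (h0 x hn)
  rw [this]
  exact isOpen_compl_singleton.preimage g'.continuous

lemma exists_sec (hds : L1DiscreteSpectrum μ φ) : ∃ s : LL μ φ hφ → K μ φ hφ, Continuous s ∧ ∀ l, qq μ φ hφ (s l) = l := by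
  have := LL_ed μ φ hφ hds
  obtain ⟨s, hs, h⟩ := CompactT2.ExtremallyDisconnected.projective (A := LL μ φ hφ)
    continuous_id (qq_cont μ φ hφ) (qq_surj μ φ hφ)
  exact ⟨s, hs, fun l => congrFun h l⟩

end L
end TM
end TMproof

/-- Every measure-preserving dynamical system with discrete spectrum has a
topological model with discrete spectrum whose projection onto the maximal trivial factor
admits a continuous section (through which it is Markov-isomorphic to a topological system). -/
theorem exists_topologicalModel_with_section
    {X : Type u} [MeasurableSpace X] (μ : MeasureTheory.Measure X)
    [MeasureTheory.IsProbabilityMeasure μ]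
    (φ : X → X) (hφ : MeasureTheory.MeasurePreserving φ μ μ)
    (hds : L1DiscreteSpectrum μ φ) :
    Nonempty (TopologicalModel μ φ) := by
  obtain ⟨s, hs, hsec⟩ := TM.exists_sec μ φ hφ hds
  exact ⟨{
    K := TM.K μ φ hφ
    ψ := TM.psi μ φ hφ
    hψ := TM.psi_cont μ φ hφ
    μK := TM.muK μ φ hφ
    regK := inferInstance
    invK := TM.psi_mp μ φ hφ
    discrete := TM.psi_discrete μ φ hφ
    S := TM.SS μ φ hφ hds
    S_one := TM.SS_one μ φ hφ hds
    S_abs := TM.SS_abs μ φ hφ hds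
    S_intertwine := TM.SS_int μ φ hφ hds
    L := TM.LL μ φ hφ
    q := TM.qq μ φ hφ
    hq := TM.qq_cont μ φ hφ
    hqsurj := TM.qq_surj μ φ hφ
    hmax := TM.qq_max μ φ hφ
    s := s
    hs := hs
    hsec := hsec }⟩
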